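/- Let H be a nilpotent group generated by a finite set V. Then for any g ∈ H there exist finite products x and y of elements of V (i.e., elements of the submonoid generated by V) such that g·x = y. -/

import Mathlib

/-!
If `a⁻¹ * b` lies in the `(n + 1)`-st term of the upper central series, then
`(a * b)⁻¹ * (b * a) = ⁅(a⁻¹ * b)⁻¹, a⁻¹⁆` lies in the `n`-th term. A common right multiple of
`a * b` and `b * a` is one of `a` and `b`, so by induction any two elements of a submonoid `S` of a
nilpotent group have a common right multiple in `S`. This is the Ore condition, under which the
fractions `y * x⁻¹` with `x, y ∈ S` form a subgroup.
-/

/-- The right Ore condition on a submonoid `S` relative to itself: any two elements of `S` have a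
common right multiple, with both cofactors in `S`. It makes right fractions multipliable. -/
def IsRightOre {M : Type*} [Monoid M] (S : Submonoid M) : Prop :=
  ∀ ⦃a⦄, a ∈ S → ∀ ⦃b⦄, b ∈ S → ∃ p ∈ S, ∃ q ∈ S, a * p = b * q

section

open scoped commutatorElement

variable {G : Type*} [Group G] {S : Submonoid G}

/-- The subgroup of right fractions `y * x⁻¹` with `x, y ∈ S`, for a right Ore submonoid `S`. A
fraction `g` is encoded by a denominator `x ∈ S` such that the numerator `g * x` lies in `S`. -/
def IsRightOre.fractionSubgroup (hS : IsRightOre S) : Subgroup G where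
  carrier := {g | ∃ x ∈ S, g * x ∈ S}
  one_mem' := ⟨1, S.one_mem, by simp⟩
  inv_mem' := by
    rintro g ⟨x, hx, hgx⟩
    exact ⟨g * x, hgx, by rwa [inv_mul_cancel_left]⟩
  mul_mem' := by
    rintro g h ⟨x, hx, hgx⟩ ⟨y, hy, hhy⟩
    obtain ⟨p, hp, q, hq, hpq⟩ := hS hx hhy
    refine ⟨y * q, S.mul_mem hy hq, ?_⟩
    have key : g * h * (y * q) = g * x * p := by
      rw [mul_assoc g x, hpq]
      simp only [mul_assoc]
    exact key ▸ S.mul_mem hgx hp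

theorem IsRightOre.subset_fractionSubgroup (hS : IsRightOre S) :
    (S : Set G) ⊆ hS.fractionSubgroup :=
  fun s hs ↦ ⟨1, S.one_mem, by rwa [mul_one]⟩

theorem inv_mul_mul_comm_mem_upperCentralSeries {n : ℕ} {a b : G}
    (h : a⁻¹ * b ∈ Subgroup.upperCentralSeries G (n + 1)) :
    (a * b)⁻¹ * (b * a) ∈ Subgroup.upperCentralSeries G n := by
  have hcomm : (a * b)⁻¹ * (b * a) = ⁅(a⁻¹ * b)⁻¹, a⁻¹⁆ := by
    rw [commutatorElement_def]
    group
  rw [hcomm]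
  exact Subgroup.mem_upperCentralSeries_succ_iff.1 (inv_mem h) a⁻¹

theorem exists_mul_eq_mul_of_inv_mul_mem_upperCentralSeries (n : ℕ) {a b : G} (ha : a ∈ S)
    (hb : b ∈ S) (h : a⁻¹ * b ∈ Subgroup.upperCentralSeries G n) :
    ∃ p ∈ S, ∃ q ∈ S, a * p = b * q := by
  induction n generalizing a b with
  | zero =>
    rw [Subgroup.upperCentralSeries_zero, Subgroup.mem_bot, inv_mul_eq_one] at h
    exact ⟨1, S.one_mem, 1, S.one_mem, by rw [h]⟩
  | succ n ih =>
    obtain ⟨p, hp, q, hq, hpq⟩ := ih (S.mul_mem ha hb) (S.mul_mem hb ha)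
      (inv_mul_mul_comm_mem_upperCentralSeries h)
    exact ⟨b * p, S.mul_mem hb hp, a * q, S.mul_mem ha hq, by simpa only [mul_assoc] using hpq⟩

theorem isRightOre_of_isNilpotent [Group.IsNilpotent G] (S : Submonoid G) : IsRightOre S := by
  obtain ⟨n, hn⟩ := Group.IsNilpotent.nilpotent G
  exact fun a ha b hb ↦
    exists_mul_eq_mul_of_inv_mul_mem_upperCentralSeries n ha hb (hn ▸ Subgroup.mem_top _)

theorem isRightOre_of_le_isNilpotent (K : Subgroup G) [Group.IsNilpotent K]
    (hSK : S ≤ K.toSubmonoid) : IsRightOre S := by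
  intro a ha b hb
  obtain ⟨p, hp, q, hq, hpq⟩ := isRightOre_of_isNilpotent (S.comap K.subtype)
    (a := ⟨a, hSK ha⟩) ha (b := ⟨b, hSK hb⟩) hb
  exact ⟨p, hp, q, hq, congrArg Subtype.val hpq⟩

end

theorem stmt5_general {H : Type*} [Group H] (V : Set H) [Group.IsNilpotent (Subgroup.closure V)]
    {g : H} (hg : g ∈ Subgroup.closure V) :
    ∃ x ∈ Submonoid.closure V, ∃ y ∈ Submonoid.closure V, g * x = y := by
  have hOre : IsRightOre (Submonoid.closure V) :=
    isRightOre_of_le_isNilpotent (Subgroup.closure V)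
      (Submonoid.closure_le.2 Subgroup.subset_closure)
  have hle : Subgroup.closure V ≤ hOre.fractionSubgroup :=
    (Subgroup.closure_le _).2 (Submonoid.subset_closure.trans hOre.subset_fractionSubgroup)
  obtain ⟨x, hx, hgx⟩ := hle hg
  exact ⟨x, hx, g * x, hgx, rfl⟩

/-- Let `H` be a nilpotent group generated by a finite set `V`.  Then for any `g ∈ H`
there are finite products `x`, `y` of elements of `V` (elements of the submonoid
generated by `V`) with `g * x = y`. -/
theorem stmt5 {H : Type*} [Group H] [Group.IsNilpotent H] (V : Finset H)
    (hgen : Subgroup.closure (V : Set H) = ⊤) (g : H) :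
    ∃ x ∈ Submonoid.closure (V : Set H), ∃ y ∈ Submonoid.closure (V : Set H),
      g * x = y :=
  stmt5_general (V : Set H) (hgen ▸ Subgroup.mem_top g)
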